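/- (Convergence of the attitude under summable reference variation.) Let (R(t), ω(t), R_g(t)) solve the rigid-body closed-loop system on [0, ∞) with R_g differentiable, and suppose: (a) sup_t ‖Ṙ_g(t)‖ ≤ M < ∞ and ∫₀^∞ ‖Ṙ_g(t)‖ dt < ∞; (b) R_g(t) → R_d ∈ SO(3) as t → ∞; and (c) there exists ε ∈ (0, 2) with φ(R(t)ᵀR_g(t)) ≤ 2 − ε for all t ≥ 0. Then R(t) → R_d and ω(t) → 0 as t → ∞. -/

import Mathlib

noncomputable section
open Matrix Filter MeasureTheory

abbrev M3 : Type := Matrix (Fin 3) (Fin 3) ℝ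
abbrev V3 : Type := Fin 3 → ℝ

/-- `SO(3)`: real 3×3 matrices with `RᵀR = I` and `det R = 1`. -/
def SO3 (R : M3) : Prop := Rᵀ * R = 1 ∧ R.det = 1

/-- Attitude error function `φ(R) = (1/2)·tr(I₃ − R)`. -/
def phi (R : M3) : ℝ := (1 / 2) * ((1 : M3) - R).trace

/-- Skew-symmetric projection `sk(A) = (A − Aᵀ)/2`. -/
def sk (A : M3) : M3 := (1 / 2 : ℝ) • (A - Aᵀ)

/-- Hat map: `x̂ y = x × y`. -/
def hat (x : V3) : M3 := !![0, -x 2, x 1; x 2, 0, -x 0; -x 1, x 0, 0]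

/-- Vee map: the vector associated with a skew-symmetric matrix. -/
def vee (S : M3) : V3 := ![S 2 1, S 0 2, S 1 0]

/-- Frobenius norm of a 3×3 real matrix. -/
def fnorm (A : M3) : ℝ := Real.sqrt (∑ i, ∑ j, (A i j) ^ 2)

/-- PD control law `τ = k_p·sk(RᵀR_g)∨ − k_d·ω`. -/
def tauPD (kp kd : ℝ) (R Rg : M3) (ω : V3) : V3 :=
  kp • vee (sk (Rᵀ * Rg)) - kd • ω

open scoped Topology

/-!
The error `E = RᵀR_g` satisfies `Ė = D - ω̂E` with `D = RᵀṘ_g`, and `e = sk(E)∨` satisfies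
`|e|² = φ(2 - φ) ≥ εφ` away from the antipodal set. Hence, for small `c`, the energy
`W = kp φ + ½ ω·Jω - c e·Jω` is comparable to `φ + |ω|²` and is strictly dissipated: the cross term
contributes decay in `φ`, the damping decay in `|ω|²`. The moving reference enters only through
`Ẇ ≤ -bW + C‖Ṙ_g‖(1 + W)`. Integrating the derivative of `log (1 + W)` shows that `W` is bounded,
and then the variation-of-constants estimate on `[t/2, t]` gives `W → 0`, as both the transient and
the tail of the integral of `‖Ṙ_g‖` vanish.
-/

section ScalarComparison

variable {W W' g : ℝ → ℝ}

lemma sub_le_integral_Ioi_abs_of_deriv_le {s t : ℝ} (hst : s ≤ t)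
    (hW : ∀ u ∈ Set.Icc s t, HasDerivAt W (W' u) u) (hg : IntegrableOn g (Set.Ioi s))
    (hle : ∀ u ∈ Set.Icc s t, W' u ≤ |g u|) :
    W t - W s ≤ ∫ u in Set.Ioi s, |g u| := by
  have hg_abs : IntegrableOn (fun u => |g u|) (Set.Ioi s) := hg.abs
  calc W t - W s ≤ ∫ u in s..t, |g u| :=
        intervalIntegral.sub_le_integral_of_hasDeriv_right_of_le hst
          (fun u hu => (hW u hu).continuousAt.continuousWithinAt)
          (fun u hu => (hW u (Set.Ioo_subset_Icc_self hu)).hasDerivWithinAt)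
          (Iff.mpr integrableOn_Icc_iff_integrableOn_Ioc <|
            hg_abs.mono_set Set.Ioc_subset_Ioi_self)
          (fun u hu => hle u (Set.Ioo_subset_Icc_self hu))
    _ = ∫ u in Set.Ioc s t, |g u| := intervalIntegral.integral_of_le hst
    _ ≤ ∫ u in Set.Ioi s, |g u| :=
        setIntegral_mono_set hg_abs (Eventually.of_forall fun u => abs_nonneg (g u))
          Set.Ioc_subset_Ioi_self.eventuallyLE

lemma exists_forall_le_of_deriv_le_mul_one_add (hW0 : ∀ t, 0 ≤ t → 0 ≤ W t)
    (hW : ∀ t, 0 ≤ t → HasDerivAt W (W' t) t) (hg : IntegrableOn g (Set.Ici 0))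
    (hle : ∀ t, 0 ≤ t → W' t ≤ g t * (1 + W t)) :
    ∃ K, ∀ t, 0 ≤ t → W t ≤ K := by
  have hpos (t : ℝ) (ht : 0 ≤ t) : 0 < 1 + W t := by linarith [hW0 t ht]
  refine ⟨Real.exp (Real.log (1 + W 0) + ∫ u in Set.Ioi 0, |g u|), fun t ht => ?_⟩
  have hlog : Real.log (1 + W t) - Real.log (1 + W 0) ≤ ∫ u in Set.Ioi 0, |g u| :=
    sub_le_integral_Ioi_abs_of_deriv_le (W := fun u => Real.log (1 + W u)) ht
      (fun u hu => ((hW u hu.1).const_add 1).log (hpos u hu.1).ne')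
      (hg.mono_set Set.Ioi_subset_Ici_self)
      (fun u hu => ((div_le_iff₀ (hpos u hu.1)).mpr (hle u hu.1)).trans (le_abs_self _))
  have hexp : 1 + W t ≤ Real.exp (Real.log (1 + W 0) + ∫ u in Set.Ioi 0, |g u|) := by
    rw [← Real.log_le_iff_le_exp (hpos t ht)]
    linarith
  linarith

lemma le_exp_mul_add_integral_of_deriv_le {b s t : ℝ} (hb : 0 ≤ b) (hst : s ≤ t)
    (hW : ∀ u ∈ Set.Icc s t, HasDerivAt W (W' u) u) (hg : IntegrableOn g (Set.Ioi s))
    (hle : ∀ u ∈ Set.Icc s t, W' u ≤ -b * W u + g u) :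
    W t ≤ Real.exp (-b * (t - s)) * W s + ∫ u in Set.Ioi s, |g u| := by
  have hderiv (u : ℝ) (hu : u ∈ Set.Icc s t) :
      HasDerivAt (fun v => Real.exp (-b * (t - v)) * W v)
        (Real.exp (-b * (t - u)) * (b * W u + W' u)) u := by
    have hexp := (((hasDerivAt_id u).const_sub t).const_mul (-b)).exp
    exact (hexp.mul (hW u hu)).congr_deriv (by simp only [id]; ring)
  have h := sub_le_integral_Ioi_abs_of_deriv_le hst hderiv hg fun u hu =>
    calc Real.exp (-b * (t - u)) * (b * W u + W' u)
        ≤ Real.exp (-b * (t - u)) * |g u| := by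
          gcongr
          linarith [hle u hu, le_abs_self (g u)]
      _ ≤ |g u| := by
          refine mul_le_of_le_one_left (abs_nonneg _) (Real.exp_le_one_iff.mpr ?_)
          nlinarith [hu.2]
  simp only [sub_self, mul_zero, Real.exp_zero, one_mul] at h
  linarith

lemma tendsto_zero_of_deriv_le_neg_mul_add {b : ℝ} (hb : 0 < b) (hW0 : ∀ t, 0 ≤ t → 0 ≤ W t)
    (hW : ∀ t, 0 ≤ t → HasDerivAt W (W' t) t) (hg : IntegrableOn g (Set.Ici 0))
    (hle : ∀ t, 0 ≤ t → W' t ≤ -b * W t + g t * (1 + W t)) :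
    Tendsto W atTop (𝓝 0) := by
  obtain ⟨K, hK⟩ : ∃ K, ∀ t, 0 ≤ t → W t ≤ K :=
    exists_forall_le_of_deriv_le_mul_one_add hW0 hW hg fun t ht => by
      nlinarith [hle t ht, hW0 t ht]
  have hupper (t : ℝ) (ht : 0 ≤ t) :
      W t ≤ Real.exp (-b * (t - t / 2)) * K + ∫ u in Set.Ioi (t / 2), |(|g u| * (1 + K))| := by
    have hhalf : 0 ≤ t / 2 := by positivity
    have hnonneg {u : ℝ} (hu : u ∈ Set.Icc (t / 2) t) : 0 ≤ u := hhalf.trans hu.1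
    calc W t ≤ Real.exp (-b * (t - t / 2)) * W (t / 2)
          + ∫ u in Set.Ioi (t / 2), |(|g u| * (1 + K))| :=
          le_exp_mul_add_integral_of_deriv_le hb.le (by linarith) (fun u hu => hW u (hnonneg hu))
            ((hg.mono_set fun u hu => hhalf.trans (le_of_lt hu)).abs.mul_const (1 + K))
            fun u hu => by
              have hgu : g u * (1 + W u) ≤ |g u| * (1 + K) := by
                have := hW0 u (hnonneg hu)
                gcongr
                exacts [le_abs_self _, hK u (hnonneg hu)]
              linarith [hle u (hnonneg hu)]
      _ ≤ _ := by gcongr; exact hK _ hhalf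
  have htail : Tendsto (fun t : ℝ => ∫ u in Set.Ioi (t / 2), |(|g u| * (1 + K))|) atTop (𝓝 0) :=
    tendsto_integral_Ioi_zero (tendsto_id.atTop_div_const two_pos)
  have hexp : Tendsto (fun t : ℝ => Real.exp (-b * (t - t / 2)) * K) atTop (𝓝 0) := by
    have hlin : Tendsto (fun t : ℝ => -b * (t - t / 2)) atTop atBot := by
      simp only [sub_half]
      exact (tendsto_id.atTop_div_const two_pos).const_mul_atTop_of_neg (neg_neg_of_pos hb)
    simpa using (Real.tendsto_exp_atBot.comp hlin).mul_const K
  refine squeeze_zero' ?_ ?_ (add_zero (0 : ℝ) ▸ hexp.add htail)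
  · filter_upwards [eventually_ge_atTop 0] with t ht using hW0 t ht
  · filter_upwards [eventually_ge_atTop 0] with t ht using hupper t ht

end ScalarComparison

section Matrix

variable {m n : Type*} [Fintype m] [Fintype n]

lemma dotProduct_self_nonneg (x : n → ℝ) : 0 ≤ x ⬝ᵥ x := by
  simpa using dotProduct_self_star_nonneg x

lemma dotProduct_sq_le (x y : n → ℝ) : (x ⬝ᵥ y) ^ 2 ≤ (x ⬝ᵥ x) * (y ⬝ᵥ y) := by
  simpa only [dotProduct, sq] using Finset.sum_mul_sq_le_sq_mul_sq Finset.univ x y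

lemma two_mul_abs_dotProduct_le (x y : n → ℝ) {r : ℝ} (hr : 0 < r) :
    2 * |x ⬝ᵥ y| ≤ r * (x ⬝ᵥ x) + r⁻¹ * (y ⬝ᵥ y) := by
  have hsq : (r * (x ⬝ᵥ x)) * (r⁻¹ * (y ⬝ᵥ y)) = (x ⬝ᵥ x) * (y ⬝ᵥ y) := by field_simp
  have hnonneg : 0 ≤ r * (x ⬝ᵥ x) + r⁻¹ * (y ⬝ᵥ y) := by
    have := dotProduct_self_nonneg x
    have := dotProduct_self_nonneg y
    positivity
  have h : |2 * (x ⬝ᵥ y)| ≤ r * (x ⬝ᵥ x) + r⁻¹ * (y ⬝ᵥ y) := by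
    refine abs_le_of_sq_le_sq ?_ hnonneg
    nlinarith [dotProduct_sq_le x y, sq_nonneg (r * (x ⬝ᵥ x) - r⁻¹ * (y ⬝ᵥ y))]
  simpa [abs_mul] using h

lemma mulVec_dotProduct_self_le (A : Matrix m n ℝ) (x : n → ℝ) :
    (A *ᵥ x) ⬝ᵥ (A *ᵥ x) ≤ (∑ i, ∑ j, A i j ^ 2) * (x ⬝ᵥ x) := by
  rw [dotProduct, Finset.sum_mul]
  refine Finset.sum_le_sum fun i _ => ?_
  simpa only [mulVec, dotProduct, sq] using Finset.sum_mul_sq_le_sq_mul_sq Finset.univ (A i) x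

lemma sum_sq_eq_trace_transpose_mul_self (A : Matrix m n ℝ) :
    ∑ i, ∑ j, A i j ^ 2 = (Aᵀ * A).trace := by
  rw [Finset.sum_comm]
  simp [trace, mul_apply, sq]

lemma trace_sq_le_card_mul_sum_sq (A : Matrix n n ℝ) :
    A.trace ^ 2 ≤ Fintype.card n * ∑ i, ∑ j, A i j ^ 2 :=
  calc A.trace ^ 2 ≤ Fintype.card n * ∑ i, A i i ^ 2 := sq_sum_le_card_mul_sum_sq
    _ ≤ Fintype.card n * ∑ i, ∑ j, A i j ^ 2 := by
      gcongr with i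
      exact Finset.single_le_sum (f := fun j => A i j ^ 2) (fun j _ => sq_nonneg _)
        (Finset.mem_univ i)

open scoped MatrixOrder in
lemma exists_pos_forall_mul_dotProduct_self_le {J : Matrix n n ℝ} (hJ : J.PosDef) :
    ∃ r > 0, ∀ x : n → ℝ, r * (x ⬝ᵥ x) ≤ x ⬝ᵥ (J *ᵥ x) := by
  classical
  rcases isEmpty_or_nonempty n with _ | _
  · exact ⟨1, one_pos, fun x => by simp⟩
  obtain ⟨r, hr, hle⟩ : ∃ r > 0, algebraMap ℝ (Matrix n n ℝ) r ≤ J := by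
    rw [CFC.exists_pos_algebraMap_le_iff hJ.isHermitian,
      hJ.isHermitian.spectrum_real_eq_range_eigenvalues]
    rintro _ ⟨i, rfl⟩
    exact hJ.eigenvalues_pos i
  refine ⟨r, hr, fun x => ?_⟩
  have h := (le_iff.mp hle).dotProduct_mulVec_nonneg x
  simpa [sub_mulVec, Algebra.algebraMap_eq_smul_one, smul_mulVec] using h

lemma hasDerivAt_dotProduct {x y : ℝ → n → ℝ} {x' y' : n → ℝ} {t : ℝ}
    (hx : HasDerivAt x x' t) (hy : HasDerivAt y y' t) :
    HasDerivAt (fun s => x s ⬝ᵥ y s) (x' ⬝ᵥ y t + x t ⬝ᵥ y') t := by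
  have h := HasDerivAt.fun_sum (u := Finset.univ) fun i _ =>
    (hasDerivAt_pi.mp hx i).fun_mul (hasDerivAt_pi.mp hy i)
  simpa [dotProduct, Finset.sum_add_distrib] using h

lemma hasDerivAt_mulVec {m : Type*} [Finite m] (A : Matrix m n ℝ) {x : ℝ → n → ℝ} {x' : n → ℝ}
    {t : ℝ} (hx : HasDerivAt x x' t) : HasDerivAt (fun s => A *ᵥ x s) (A *ᵥ x') t :=
  hasDerivAt_pi.mpr fun i => by
    simpa [mulVec] using hasDerivAt_dotProduct (hasDerivAt_const t (A i)) hx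

lemma hasDerivAt_transpose_mul_apply {l p : Type*} {A : ℝ → Matrix n l ℝ} {B : ℝ → Matrix n p ℝ}
    {A' : Matrix n l ℝ} {B' : Matrix n p ℝ} {t : ℝ}
    (hA : ∀ i j, HasDerivAt (fun s => A s i j) (A' i j) t)
    (hB : ∀ i j, HasDerivAt (fun s => B s i j) (B' i j) t) (i : l) (j : p) :
    HasDerivAt (fun s => ((A s)ᵀ * B s) i j) ((A'ᵀ * B t + (A t)ᵀ * B') i j) t := by
  have h := hasDerivAt_dotProduct (hasDerivAt_pi.mpr fun k => hA k i)
    (hasDerivAt_pi.mpr fun k => hB k j)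
  simpa [mul_apply, dotProduct] using h

lemma tendsto_zero_of_dotProduct_self {α : Type*} {l : Filter α} {x : α → n → ℝ}
    (hx : Tendsto (fun a => x a ⬝ᵥ x a) l (𝓝 0)) : Tendsto x l (𝓝 0) := by
  refine tendsto_pi_nhds.mpr fun i => squeeze_zero_norm (fun a => ?_) (by simpa using hx.sqrt)
  refine Real.abs_le_sqrt ?_
  rw [sq]
  exact Finset.single_le_sum (f := fun i => x a i * x a i) (fun _ _ => mul_self_nonneg _)
    (Finset.mem_univ i)

end Matrix

section Attitude

variable {E R S : M3}

lemma fnorm_nonneg (A : M3) : 0 ≤ fnorm A := Real.sqrt_nonneg _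

lemma fnorm_sq (A : M3) : fnorm A ^ 2 = ∑ i, ∑ j, A i j ^ 2 :=
  Real.sq_sqrt (by positivity)

lemma fnorm_eq_sqrt_trace (A : M3) : fnorm A = √(Aᵀ * A).trace := by
  rw [fnorm, sum_sq_eq_trace_transpose_mul_self]

lemma tendsto_zero_of_fnorm {α : Type*} {l : Filter α} {A : α → M3}
    (hA : Tendsto (fun a => fnorm (A a)) l (𝓝 0)) : Tendsto A l (𝓝 0) := by
  refine tendsto_pi_nhds.mpr fun i => tendsto_pi_nhds.mpr fun j =>
    squeeze_zero_norm (fun a => Real.abs_le_sqrt ?_) hA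
  calc A a i j ^ 2 ≤ ∑ j, A a i j ^ 2 :=
        Finset.single_le_sum (f := fun j => A a i j ^ 2) (fun _ _ => sq_nonneg _)
          (Finset.mem_univ j)
    _ ≤ ∑ i, ∑ j, A a i j ^ 2 :=
        Finset.single_le_sum (f := fun i => ∑ j, A a i j ^ 2) (fun _ _ => by positivity)
          (Finset.mem_univ i)

lemma abs_trace_le_two_mul_fnorm (A : M3) : |A.trace| ≤ 2 * fnorm A := by
  refine abs_le_of_sq_le_sq ?_ (by linarith [fnorm_nonneg A])
  have h := trace_sq_le_card_mul_sum_sq A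
  rw [← fnorm_sq, Fintype.card_fin] at h
  push_cast at h
  nlinarith [sq_nonneg (fnorm A)]

lemma mulVec_dotProduct_self_le_fnorm_sq (A : M3) (x : V3) :
    (A *ᵥ x) ⬝ᵥ (A *ᵥ x) ≤ fnorm A ^ 2 * (x ⬝ᵥ x) :=
  fnorm_sq A ▸ mulVec_dotProduct_self_le A x

lemma two_mul_abs_dotProduct_mulVec_le (A : M3) (x y : V3) :
    2 * |x ⬝ᵥ (A *ᵥ y)| ≤ x ⬝ᵥ x + fnorm A ^ 2 * (y ⬝ᵥ y) := by
  have h := two_mul_abs_dotProduct_le x (A *ᵥ y) one_pos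
  linarith [mulVec_dotProduct_self_le_fnorm_sq A y]

lemma SO3.mul_transpose (hR : SO3 R) : R * Rᵀ = 1 :=
  mul_eq_one_comm.mp hR.1

lemma SO3.transpose_mul (hR : SO3 R) (hS : SO3 S) : SO3 (Rᵀ * S) := by
  constructor
  · rw [Matrix.transpose_mul, transpose_transpose, Matrix.mul_assoc, ← Matrix.mul_assoc R,
      hR.mul_transpose, Matrix.one_mul, hS.1]
  · rw [det_mul, det_transpose, hR.2, hS.2, one_mul]

lemma SO3.adjugate_eq (hR : SO3 R) : R.adjugate = Rᵀ :=
  calc R.adjugate = R.adjugate * (R * Rᵀ) := by rw [hR.mul_transpose, Matrix.mul_one]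
    _ = Rᵀ := by rw [← Matrix.mul_assoc, adjugate_mul, hR.2, one_smul, Matrix.one_mul]

lemma SO3.fnorm_transpose_mul (hR : SO3 R) (A : M3) : fnorm (Rᵀ * A) = fnorm A := by
  rw [fnorm_eq_sqrt_trace, fnorm_eq_sqrt_trace, Matrix.transpose_mul, transpose_transpose,
    Matrix.mul_assoc, ← Matrix.mul_assoc R, hR.mul_transpose, Matrix.one_mul]

lemma SO3.fnorm_mul (hR : SO3 R) (A : M3) : fnorm (A * R) = fnorm A := by
  rw [fnorm_eq_sqrt_trace, fnorm_eq_sqrt_trace, Matrix.transpose_mul, Matrix.mul_assoc,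
    trace_mul_comm, Matrix.mul_assoc, Matrix.mul_assoc, hR.mul_transpose, Matrix.mul_one]

lemma phi_eq (A : M3) : phi A = (3 - A.trace) / 2 := by
  simp [phi, div_eq_inv_mul]

lemma SO3.fnorm_sub_sq (hR : SO3 R) (hS : SO3 S) : fnorm (R - S) ^ 2 = 4 * phi (Rᵀ * S) := by
  have hsymm : (Sᵀ * R).trace = (Rᵀ * S).trace := by
    rw [← trace_transpose, Matrix.transpose_mul, transpose_transpose]
  rw [fnorm_sq, sum_sq_eq_trace_transpose_mul_self, transpose_sub, sub_mul, mul_sub, mul_sub,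
    hR.1, hS.1, phi_eq]
  simp only [trace_sub, trace_one, Fintype.card_fin, hsymm]
  push_cast
  ring

lemma SO3.phi_nonneg (hE : SO3 E) : 0 ≤ phi E := by
  have h := SO3.fnorm_sub_sq (R := 1) ⟨by simp, by simp⟩ hE
  rw [transpose_one, Matrix.one_mul] at h
  linarith [sq_nonneg (fnorm (1 - E))]

lemma vee_sk_eq (A : M3) :
    vee (sk A) = ![(A 2 1 - A 1 2) / 2, (A 0 2 - A 2 0) / 2, (A 1 0 - A 0 1) / 2] := by
  ext i
  fin_cases i <;> simp [vee, sk, div_eq_inv_mul]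

lemma SO3.vee_sk_dotProduct_self (hE : SO3 E) :
    vee (sk E) ⬝ᵥ vee (sk E) = phi E * (2 - phi E) := by
  have hcofactor (i : Fin 3) : E.adjugate i i = E i i := by rw [hE.adjugate_eq, transpose_apply]
  have h0 := hcofactor 0
  have h1 := hcofactor 1
  have h2 := hcofactor 2
  have hnorm : ∑ i, ∑ j, E i j ^ 2 = 3 := by
    simp [sum_sq_eq_trace_transpose_mul_self, hE.1]
  simp only [adjugate_fin_three, of_apply, cons_val', cons_val_fin_one, cons_val_zero,
    cons_val_one, cons_val] at h0 h1 h2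
  simp only [Fin.sum_univ_three] at hnorm
  rw [vee_sk_eq, vec3_dotProduct', phi_eq, trace_fin_three]
  linear_combination (1 / 4) * hnorm + (1 / 2) * (h0 + h1 + h2)

lemma SO3.vee_sk_dotProduct_self_le_two_mul_phi (hE : SO3 E) :
    vee (sk E) ⬝ᵥ vee (sk E) ≤ 2 * phi E := by
  linarith [hE.vee_sk_dotProduct_self, sq_nonneg (phi E)]

lemma SO3.vee_sk_dotProduct_self_le_one (hE : SO3 E) : vee (sk E) ⬝ᵥ vee (sk E) ≤ 1 := by
  linarith [hE.vee_sk_dotProduct_self, sq_nonneg (phi E - 1)]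

lemma vee_sk_sub (A B : M3) : vee (sk (A - B)) = vee (sk A) - vee (sk B) := by
  rw [vee_sk_eq, vee_sk_eq, vee_sk_eq]
  ext i
  fin_cases i <;> simp <;> ring

lemma vee_sk_dotProduct_self_le (A : M3) : vee (sk A) ⬝ᵥ vee (sk A) ≤ fnorm A ^ 2 / 2 := by
  rw [fnorm_sq, vee_sk_eq, vec3_dotProduct']
  simp only [Fin.sum_univ_three]
  nlinarith [sq_nonneg (A 2 1 + A 1 2), sq_nonneg (A 0 2 + A 2 0), sq_nonneg (A 1 0 + A 0 1),
    sq_nonneg (A 0 0), sq_nonneg (A 1 1), sq_nonneg (A 2 2)]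

lemma two_mul_abs_vee_sk_dotProduct_le (A : M3) (x : V3) :
    2 * |vee (sk A) ⬝ᵥ x| ≤ fnorm A * (1 + x ⬝ᵥ x) := by
  have hx := dotProduct_self_nonneg x
  have h : |2 * (vee (sk A) ⬝ᵥ x)| ≤ fnorm A * (1 + x ⬝ᵥ x) := by
    refine abs_le_of_sq_le_sq ?_ (mul_nonneg (fnorm_nonneg A) (by linarith))
    calc (2 * (vee (sk A) ⬝ᵥ x)) ^ 2 = 4 * (vee (sk A) ⬝ᵥ x) ^ 2 := by ring
      _ ≤ 4 * (fnorm A ^ 2 / 2 * (x ⬝ᵥ x)) := by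
        gcongr
        exact (dotProduct_sq_le _ x).trans (by gcongr; exact vee_sk_dotProduct_self_le A)
      _ ≤ (fnorm A * (1 + x ⬝ᵥ x)) ^ 2 := by nlinarith [sq_nonneg (fnorm A)]
  simpa [abs_mul] using h

lemma hat_transpose (x : V3) : (hat x)ᵀ = -hat x := by
  ext i j
  fin_cases i <;> fin_cases j <;> simp [hat]

lemma fnorm_hat_sq (x : V3) : fnorm (hat x) ^ 2 = 2 * (x ⬝ᵥ x) := by
  rw [fnorm_sq]
  simp only [hat, dotProduct, Fin.sum_univ_three, of_apply, cons_val', cons_val_fin_one,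
    cons_val_zero, cons_val_one, cons_val]
  ring

lemma trace_hat_mul (x : V3) (A : M3) : (hat x * A).trace = -2 * (x ⬝ᵥ vee (sk A)) := by
  rw [vee_sk_eq, trace_fin_three]
  simp only [mul_apply, hat, dotProduct, Fin.sum_univ_three, of_apply, cons_val',
    cons_val_fin_one, cons_val_zero, cons_val_one, cons_val]
  ring

lemma SO3.vee_sk_hat_mul_dotProduct_self_le (hE : SO3 E) (x : V3) :
    vee (sk (hat x * E)) ⬝ᵥ vee (sk (hat x * E)) ≤ x ⬝ᵥ x := by
  have h := vee_sk_dotProduct_self_le (hat x * E)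
  rw [hE.fnorm_mul, fnorm_hat_sq] at h
  linarith

lemma two_mul_abs_dotProduct_crossProduct_le {e : V3} (he : e ⬝ᵥ e ≤ 1) (x y : V3) :
    2 * |e ⬝ᵥ crossProduct x y| ≤ x ⬝ᵥ x + y ⬝ᵥ y := by
  have hx := dotProduct_self_nonneg x
  have hy := dotProduct_self_nonneg y
  have hcross : crossProduct x y ⬝ᵥ crossProduct x y ≤ (x ⬝ᵥ x) * (y ⬝ᵥ y) := by
    rw [cross_dot_cross, dotProduct_comm y x]
    linarith [mul_self_nonneg (x ⬝ᵥ y)]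
  have h : |2 * (e ⬝ᵥ crossProduct x y)| ≤ x ⬝ᵥ x + y ⬝ᵥ y := by
    refine abs_le_of_sq_le_sq ?_ (by positivity)
    calc (2 * (e ⬝ᵥ crossProduct x y)) ^ 2 = 4 * (e ⬝ᵥ crossProduct x y) ^ 2 := by ring
      _ ≤ 4 * ((e ⬝ᵥ e) * (crossProduct x y ⬝ᵥ crossProduct x y)) := by
        gcongr
        exact dotProduct_sq_le _ _
      _ ≤ 4 * (1 * ((x ⬝ᵥ x) * (y ⬝ᵥ y))) := by
        gcongr
        exact dotProduct_self_nonneg _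
      _ ≤ (x ⬝ᵥ x + y ⬝ᵥ y) ^ 2 := by linarith [sq_nonneg (x ⬝ᵥ x - y ⬝ᵥ y)]
  simpa [abs_mul] using h

variable {A : ℝ → M3} {A' : M3} {t : ℝ}

lemma hasDerivAt_phi (hA : ∀ i j, HasDerivAt (fun s => A s i j) (A' i j) t) :
    HasDerivAt (fun s => phi (A s)) (-(1 / 2) * A'.trace) t := by
  have htrace : HasDerivAt (fun s => (A s).trace) A'.trace t :=
    HasDerivAt.fun_sum fun i _ => hA i i
  simp only [phi_eq]
  exact ((htrace.const_sub 3).div_const 2).congr_deriv (by ring)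

lemma hasDerivAt_vee_sk (hA : ∀ i j, HasDerivAt (fun s => A s i j) (A' i j) t) :
    HasDerivAt (fun s => vee (sk (A s))) (vee (sk A')) t := by
  have h (i j : Fin 3) := ((hA i j).fun_sub (hA j i)).const_mul (1 / 2 : ℝ)
  refine hasDerivAt_pi.mpr fun i => ?_
  fin_cases i
  · simpa [vee, sk] using h 2 1
  · simpa [vee, sk] using h 0 2
  · simpa [vee, sk] using h 1 0

lemma hasDerivAt_transpose_mul_of_kinematics {R S : ℝ → M3} {S' : M3} {x : V3} {t : ℝ}
    (hR : ∀ i j, HasDerivAt (fun s => R s i j) ((R t * hat x) i j) t)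
    (hS : ∀ i j, HasDerivAt (fun s => S s i j) (S' i j) t) (i j : Fin 3) :
    HasDerivAt (fun s => ((R s)ᵀ * S s) i j)
      (((R t)ᵀ * S' - hat x * ((R t)ᵀ * S t)) i j) t := by
  refine (hasDerivAt_transpose_mul_apply hR hS i j).congr_deriv ?_
  rw [Matrix.transpose_mul, hat_transpose, Matrix.neg_mul, Matrix.neg_mul, Matrix.mul_assoc,
    neg_add_eq_sub]

lemma tendsto_sub_zero_of_phi {α : Type*} {l : Filter α} {R S : α → M3}
    (hR : ∀ᶠ a in l, SO3 (R a)) (hS : ∀ᶠ a in l, SO3 (S a))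
    (hphi : Tendsto (fun a => phi ((R a)ᵀ * S a)) l (𝓝 0)) :
    Tendsto (fun a => R a - S a) l (𝓝 0) := by
  have hsqrt : Tendsto (fun a => √(4 * phi ((R a)ᵀ * S a))) l (𝓝 0) := by
    simpa using (hphi.const_mul 4).sqrt
  refine tendsto_zero_of_fnorm (hsqrt.congr' ?_)
  filter_upwards [hR, hS] with a hRa hSa
  rw [← hRa.fnorm_sub_sq hSa, Real.sqrt_sq (fnorm_nonneg _)]

end Attitude

section Lyapunov

/-- The attitude energy `kp φ(E) + ½ ω·Jω` of the attitude error `E = RᵀR_g`, corrected by the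
cross term `-c e·Jω` with `e = sk(E)∨` to make it strictly decreasing. -/
def lyapunov (J : M3) (kp c : ℝ) (E : M3) (ω : V3) : ℝ :=
  kp * phi E + 1 / 2 * (ω ⬝ᵥ (J *ᵥ ω)) - c * (vee (sk E) ⬝ᵥ (J *ᵥ ω))

/-- The derivative of `lyapunov` along `Ė = D - ω̂E`, `Jω̇ = Jω × ω + kp e - kd ω`; for the
closed loop, `D = RᵀṘ_g` is the contribution of the moving reference. -/
def lyapunovDeriv (J : M3) (kp kd c : ℝ) (E D : M3) (ω : V3) : ℝ :=
  -kd * (ω ⬝ᵥ ω) - kp / 2 * D.trace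
    - c * (vee (sk (D - hat ω * E)) ⬝ᵥ (J *ᵥ ω)
      + (vee (sk E) ⬝ᵥ crossProduct (J *ᵥ ω) ω
        + (kp * (vee (sk E) ⬝ᵥ vee (sk E)) - kd * (vee (sk E) ⬝ᵥ ω))))

variable {J : M3} {kp kd c : ℝ}

lemma hasDerivAt_lyapunov (hJ : Jᵀ = J) {E : ℝ → M3} {D : M3} {ω : ℝ → V3} {ω' : V3} {t : ℝ}
    (hE : ∀ i j, HasDerivAt (fun s => E s i j) ((D - hat (ω t) * E t) i j) t)
    (hω : HasDerivAt ω ω' t)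
    (hdyn : J *ᵥ ω' = crossProduct (J *ᵥ ω t) (ω t) + (kp • vee (sk (E t)) - kd • ω t)) :
    HasDerivAt (fun s => lyapunov J kp c (E s) (ω s)) (lyapunovDeriv J kp kd c (E t) D (ω t))
      t := by
  have hmomentum := hasDerivAt_mulVec J hω
  have hkinetic := hasDerivAt_dotProduct hω hmomentum
  have hcross := hasDerivAt_dotProduct (hasDerivAt_vee_sk hE) hmomentum
  refine ((((hasDerivAt_phi hE).const_mul kp).add (hkinetic.const_mul (1 / 2))).sub
    (hcross.const_mul c)).congr_deriv ?_
  have hpower : ω' ⬝ᵥ (J *ᵥ ω t) = ω t ⬝ᵥ (J *ᵥ ω') := by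
    rw [dotProduct_mulVec, ← mulVec_transpose, hJ, dotProduct_comm]
  have hgyro : ω t ⬝ᵥ crossProduct (J *ᵥ ω t) (ω t) = 0 := by
    rw [triple_product_permutation, cross_self, dotProduct_zero]
  rw [hpower, hdyn]
  simp only [lyapunovDeriv, trace_sub, trace_hat_mul, dotProduct_add, dotProduct_sub,
    dotProduct_smul, smul_eq_mul, hgyro]
  rw [dotProduct_comm (vee (sk (E t))) (ω t)]
  ring

variable {E : M3}

lemma le_lyapunov {m : ℝ} {ω : V3} (hE : SO3 E) (hc : 0 ≤ c) (hckp : c ≤ kp / 2)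
    (hcJ : c * fnorm J ^ 2 ≤ m / 2) (hm : m * (ω ⬝ᵥ ω) ≤ ω ⬝ᵥ (J *ᵥ ω)) :
    min (kp / 2) (m / 4) * (phi E + ω ⬝ᵥ ω) ≤ lyapunov J kp c E ω := by
  have hcross : vee (sk E) ⬝ᵥ (J *ᵥ ω) ≤ phi E + fnorm J ^ 2 / 2 * (ω ⬝ᵥ ω) := by
    linarith [le_abs_self (vee (sk E) ⬝ᵥ (J *ᵥ ω)),
      two_mul_abs_dotProduct_mulVec_le J (vee (sk E)) ω, hE.vee_sk_dotProduct_self_le_two_mul_phi]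
  have hcross_c := mul_le_mul_of_nonneg_left hcross hc
  have hphi := mul_le_mul_of_nonneg_right hckp hE.phi_nonneg
  have hkinetic := mul_le_mul_of_nonneg_right hcJ (dotProduct_self_nonneg ω)
  calc min (kp / 2) (m / 4) * (phi E + ω ⬝ᵥ ω) ≤ kp / 2 * phi E + m / 4 * (ω ⬝ᵥ ω) := by
        rw [mul_add]
        gcongr
        exacts [hE.phi_nonneg, min_le_left _ _, dotProduct_self_nonneg ω, min_le_right _ _]
    _ ≤ lyapunov J kp c E ω := by
        rw [lyapunov]
        linarith

lemma lyapunov_le {ω : V3} (hE : SO3 E) (hkp : 0 ≤ kp) (hc : 0 ≤ c) :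
    lyapunov J kp c E ω ≤
      (kp + c + (1 + fnorm J ^ 2) / 4 + c * fnorm J ^ 2 / 2) * (phi E + ω ⬝ᵥ ω) := by
  have hkinetic : ω ⬝ᵥ (J *ᵥ ω) ≤ (1 + fnorm J ^ 2) / 2 * (ω ⬝ᵥ ω) := by
    linarith [le_abs_self (ω ⬝ᵥ (J *ᵥ ω)), two_mul_abs_dotProduct_mulVec_le J ω ω]
  have hcross : -(vee (sk E) ⬝ᵥ (J *ᵥ ω)) ≤ phi E + fnorm J ^ 2 / 2 * (ω ⬝ᵥ ω) := by
    linarith [neg_le_abs (vee (sk E) ⬝ᵥ (J *ᵥ ω)),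
      two_mul_abs_dotProduct_mulVec_le J (vee (sk E)) ω, hE.vee_sk_dotProduct_self_le_two_mul_phi]
  have hcross_c := mul_le_mul_of_nonneg_left hcross hc
  have hphi : 0 ≤ ((1 + fnorm J ^ 2) / 4 + c * fnorm J ^ 2 / 2) * phi E :=
    mul_nonneg (by positivity) hE.phi_nonneg
  have hω : 0 ≤ (kp + c) * (ω ⬝ᵥ ω) := mul_nonneg (by positivity) (dotProduct_self_nonneg ω)
  rw [lyapunov]
  linarith

lemma lyapunovDeriv_le {D : M3} {ω : V3} (hE : SO3 E) (hkp : 0 < kp) (hkd : 0 < kd)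
    (hc : 0 ≤ c) :
    lyapunovDeriv J kp kd c E D ω ≤
      (c * (1 + fnorm J ^ 2 + kd ^ 2 / (2 * kp)) - kd) * (ω ⬝ᵥ ω)
        - c * kp / 2 * (vee (sk E) ⬝ᵥ vee (sk E))
        + (kp + c / 2 * (1 + fnorm J ^ 2 * (ω ⬝ᵥ ω))) * fnorm D := by
  set e := vee (sk E) with he
  set L := fnorm J ^ 2
  have hJω := mulVec_dotProduct_self_le_fnorm_sq J ω
  have htrace : -D.trace ≤ 2 * fnorm D := (neg_le_abs _).trans (abs_trace_le_two_mul_fnorm D)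
  have hreference : -(vee (sk D) ⬝ᵥ (J *ᵥ ω)) ≤ fnorm D * (1 + L * (ω ⬝ᵥ ω)) / 2 := by
    have := mul_le_mul_of_nonneg_left hJω (fnorm_nonneg D)
    linarith [neg_le_abs (vee (sk D) ⬝ᵥ (J *ᵥ ω)), two_mul_abs_vee_sk_dotProduct_le D (J *ᵥ ω)]
  have hrotation : vee (sk (hat ω * E)) ⬝ᵥ (J *ᵥ ω) ≤ (1 + L) / 2 * (ω ⬝ᵥ ω) := by
    linarith [le_abs_self (vee (sk (hat ω * E)) ⬝ᵥ (J *ᵥ ω)),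
      two_mul_abs_dotProduct_mulVec_le J (vee (sk (hat ω * E))) ω,
      hE.vee_sk_hat_mul_dotProduct_self_le ω]
  have hgyro : -(e ⬝ᵥ crossProduct (J *ᵥ ω) ω) ≤ (1 + L) / 2 * (ω ⬝ᵥ ω) := by
    linarith [neg_le_abs (e ⬝ᵥ crossProduct (J *ᵥ ω) ω),
      two_mul_abs_dotProduct_crossProduct_le hE.vee_sk_dotProduct_self_le_one (J *ᵥ ω) ω]
  have hdamping : kd * (e ⬝ᵥ ω) ≤ kp / 2 * (e ⬝ᵥ e) + kd ^ 2 / (2 * kp) * (ω ⬝ᵥ ω) :=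
    calc kd * (e ⬝ᵥ ω) ≤ kd / 2 * (2 * |e ⬝ᵥ ω|) := by nlinarith [le_abs_self (e ⬝ᵥ ω)]
      _ ≤ kd / 2 * (kp / kd * (e ⬝ᵥ e) + (kp / kd)⁻¹ * (ω ⬝ᵥ ω)) := by
        gcongr
        exact two_mul_abs_dotProduct_le e ω (div_pos hkp hkd)
      _ = kp / 2 * (e ⬝ᵥ e) + kd ^ 2 / (2 * kp) * (ω ⬝ᵥ ω) := by field_simp
  have htrace_kp := mul_le_mul_of_nonneg_left htrace hkp.le
  have hcross := mul_le_mul_of_nonneg_left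
    (add_le_add (add_le_add hreference hrotation) (add_le_add hgyro hdamping)) hc
  rw [lyapunovDeriv, vee_sk_sub, sub_dotProduct, ← he]
  linarith

lemma lyapunovDeriv_le_of_phi_le {D : M3} {ω : V3} {ε : ℝ} (hE : SO3 E) (hkp : 0 < kp)
    (hkd : 0 < kd) (hc : 0 ≤ c) (hckd : c * (1 + fnorm J ^ 2 + kd ^ 2 / (2 * kp)) ≤ kd / 2)
    (hphi : phi E ≤ 2 - ε) :
    lyapunovDeriv J kp kd c E D ω ≤
      -(min (kd / 2) (c * kp * ε / 2) * (phi E + ω ⬝ᵥ ω))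
        + (kp + c / 2 * (1 + fnorm J ^ 2 * (ω ⬝ᵥ ω))) * fnorm D := by
  have he : ε * phi E ≤ vee (sk E) ⬝ᵥ vee (sk E) := by
    rw [hE.vee_sk_dotProduct_self, mul_comm]
    exact mul_le_mul_of_nonneg_left (by linarith) hE.phi_nonneg
  have hω0 := dotProduct_self_nonneg ω
  have hattitude : min (kd / 2) (c * kp * ε / 2) * phi E ≤
      c * kp / 2 * (vee (sk E) ⬝ᵥ vee (sk E)) :=
    calc min (kd / 2) (c * kp * ε / 2) * phi E ≤ c * kp * ε / 2 * phi E := by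
          gcongr
          exacts [hE.phi_nonneg, min_le_right _ _]
      _ = c * kp / 2 * (ε * phi E) := by ring
      _ ≤ c * kp / 2 * (vee (sk E) ⬝ᵥ vee (sk E)) := by gcongr
  have hvelocity := mul_le_mul_of_nonneg_right (min_le_left (kd / 2) (c * kp * ε / 2)) hω0
  have hgain := mul_le_mul_of_nonneg_right hckd hω0
  linarith [lyapunovDeriv_le (J := J) (D := D) (ω := ω) hE hkp hkd hc]

lemma exists_strict_lyapunov {ε : ℝ} (hJ : J.PosDef) (hkp : 0 < kp) (hkd : 0 < kd) (hε : 0 < ε) :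
    ∃ c a b C : ℝ, 0 < a ∧ 0 < b ∧
      (∀ E ω, SO3 E → a * (phi E + ω ⬝ᵥ ω) ≤ lyapunov J kp c E ω) ∧
      ∀ E D ω, SO3 E → phi E ≤ 2 - ε → lyapunovDeriv J kp kd c E D ω ≤
        -b * lyapunov J kp c E ω + C * fnorm D * (1 + lyapunov J kp c E ω) := by
  obtain ⟨m, hm, hJm⟩ := exists_pos_forall_mul_dotProduct_self_le hJ
  obtain ⟨c, hc, hc_lt⟩ := exists_pos_mul_lt (lt_min (half_pos hkd) (lt_min (half_pos hkp)
    (half_pos hm))) (1 + fnorm J ^ 2 + kd ^ 2 / (2 * kp))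
  rw [mul_comm _ c, lt_min_iff, lt_min_iff] at hc_lt
  obtain ⟨hckd, hckp, hcm⟩ := hc_lt
  have hgain : 0 < kd ^ 2 / (2 * kp) := by positivity
  set a := min (kp / 2) (m / 4)
  set δ := min (kd / 2) (c * kp * ε / 2)
  have ha : 0 < a := by positivity
  have hδ : 0 < δ := by positivity
  have hlower (E : M3) (ω : V3) (hE : SO3 E) : a * (phi E + ω ⬝ᵥ ω) ≤ lyapunov J kp c E ω :=
    le_lyapunov hE hc.le (by nlinarith [sq_nonneg (fnorm J)]) (by nlinarith) (hJm ω)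
  refine ⟨c, a, δ / (kp + c + (1 + fnorm J ^ 2) / 4 + c * fnorm J ^ 2 / 2),
    kp + c / 2 + c * fnorm J ^ 2 / (2 * a), ha, div_pos hδ (by positivity), hlower,
    fun E D ω hE hphi => ?_⟩
  have hupper : δ / (kp + c + (1 + fnorm J ^ 2) / 4 + c * fnorm J ^ 2 / 2) * lyapunov J kp c E ω
      ≤ δ * (phi E + ω ⬝ᵥ ω) := by
    rw [div_mul_eq_mul_div, div_le_iff₀' (by positivity), mul_left_comm]
    gcongr
    exact lyapunov_le hE hkp.le hc.le
  have hforcing : kp + c / 2 * (1 + fnorm J ^ 2 * (ω ⬝ᵥ ω)) ≤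
      (kp + c / 2 + c * fnorm J ^ 2 / (2 * a)) * (1 + lyapunov J kp c E ω) := by
    have hω : a * (ω ⬝ᵥ ω) ≤ lyapunov J kp c E ω := by
      linarith [hlower E ω hE, mul_nonneg ha.le hE.phi_nonneg]
    have hW : 0 ≤ lyapunov J kp c E ω :=
      (mul_nonneg ha.le (dotProduct_self_nonneg ω)).trans hω
    calc kp + c / 2 * (1 + fnorm J ^ 2 * (ω ⬝ᵥ ω))
        = kp + c / 2 + c * fnorm J ^ 2 / (2 * a) * (a * (ω ⬝ᵥ ω)) := by field_simp; ring
      _ ≤ (kp + c / 2) * (1 + lyapunov J kp c E ω)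
          + c * fnorm J ^ 2 / (2 * a) * (1 + lyapunov J kp c E ω) := by
        gcongr
        · exact le_mul_of_one_le_right (by positivity) (by linarith)
        · linarith
      _ = _ := by ring
  have hdecay := lyapunovDeriv_le_of_phi_le (J := J) (D := D) (ω := ω) hE hkp hkd hc.le hckd.le hphi
  linarith [mul_le_mul_of_nonneg_right hforcing (fnorm_nonneg D)]

lemma tendsto_phi_and_velocity_zero {ε : ℝ} {E D : ℝ → M3} {ω ω' : ℝ → V3} (hJ : J.PosDef)
    (hkp : 0 < kp) (hkd : 0 < kd) (hε : 0 < ε) (hESO : ∀ t, 0 ≤ t → SO3 (E t))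
    (hE : ∀ t, 0 ≤ t → ∀ i j,
      HasDerivAt (fun s => E s i j) ((D t - hat (ω t) * E t) i j) t)
    (hω : ∀ t, 0 ≤ t → HasDerivAt ω (ω' t) t)
    (hdyn : ∀ t, 0 ≤ t →
      J *ᵥ ω' t = crossProduct (J *ᵥ ω t) (ω t) + (kp • vee (sk (E t)) - kd • ω t))
    (hD : IntegrableOn (fun t => fnorm (D t)) (Set.Ici 0))
    (hphi : ∀ t, 0 ≤ t → phi (E t) ≤ 2 - ε) :
    Tendsto (fun t => phi (E t)) atTop (𝓝 0) ∧ Tendsto ω atTop (𝓝 0) := by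
  obtain ⟨c, a, b, C, ha, hb, hlower, hdecay⟩ := exists_strict_lyapunov hJ hkp hkd hε
  have hbound (t : ℝ) (ht : 0 ≤ t) :
      phi (E t) + ω t ⬝ᵥ ω t ≤ lyapunov J kp c (E t) (ω t) / a := by
    rw [le_div_iff₀' ha]
    exact hlower _ _ (hESO t ht)
  have hphi0 (t : ℝ) (ht : 0 ≤ t) : 0 ≤ phi (E t) := (hESO t ht).phi_nonneg
  have hω0 (t : ℝ) : 0 ≤ ω t ⬝ᵥ ω t := dotProduct_self_nonneg (ω t)
  have hW : Tendsto (fun t => lyapunov J kp c (E t) (ω t)) atTop (𝓝 0) :=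
    tendsto_zero_of_deriv_le_neg_mul_add hb
      (fun t ht => (mul_nonneg ha.le (add_nonneg (hphi0 t ht) (hω0 t))).trans
        (hlower _ _ (hESO t ht)))
      (fun t ht => hasDerivAt_lyapunov (conjTranspose_eq_transpose_of_trivial J ▸ hJ.isHermitian)
        (hE t ht) (hω t ht) (hdyn t ht))
      (hD.const_mul C) fun t ht => hdecay _ _ _ (hESO t ht) (hphi t ht)
  have hWa : Tendsto (fun t => lyapunov J kp c (E t) (ω t) / a) atTop (𝓝 0) :=
    zero_div a ▸ hW.div_const a
  have hnonneg : ∀ᶠ t : ℝ in atTop, 0 ≤ t := eventually_ge_atTop 0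
  refine ⟨squeeze_zero' (hnonneg.mono hphi0) (hnonneg.mono fun t ht => ?_) hWa,
    tendsto_zero_of_dotProduct_self <|
      squeeze_zero' (.of_forall hω0) (hnonneg.mono fun t ht => ?_) hWa⟩
  all_goals linarith [hbound t ht, hphi0 t ht, hω0 t]

end Lyapunov

theorem attitude_convergence_summable_reference_general
    (J : M3) (kp kd ε : ℝ)
    (hJ : J.PosDef) (hkp : 0 < kp) (hkd : 0 < kd) (hε₀ : 0 < ε)
    (R Rg Rg' : ℝ → M3) (ω ω' : ℝ → V3) (Rd : M3)
    (hRSO : ∀ t ∈ Set.Ici (0 : ℝ), SO3 (R t))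
    (hRgSO : ∀ t ∈ Set.Ici (0 : ℝ), SO3 (Rg t))
    (hR : ∀ t ∈ Set.Ici (0 : ℝ), ∀ i j,
      HasDerivAt (fun s => R s i j) ((R t * hat (ω t)) i j) t)
    (hω : ∀ t ∈ Set.Ici (0 : ℝ), ∀ i, HasDerivAt (fun s => ω s i) (ω' t i) t)
    (hdyn : ∀ t ∈ Set.Ici (0 : ℝ), J.mulVec (ω' t) =
      crossProduct (J.mulVec (ω t)) (ω t) + tauPD kp kd (R t) (Rg t) (ω t))
    (hRg : ∀ t ∈ Set.Ici (0 : ℝ), ∀ i j,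
      HasDerivAt (fun s => Rg s i j) (Rg' t i j) t)
    (hsum : IntegrableOn (fun t => fnorm (Rg' t)) (Set.Ici (0 : ℝ)))
    (hRgconv : Tendsto Rg atTop (nhds Rd))
    (hphi : ∀ t ∈ Set.Ici (0 : ℝ), phi ((R t)ᵀ * Rg t) ≤ 2 - ε) :
    Tendsto R atTop (nhds Rd) ∧ Tendsto ω atTop (nhds 0) := by
  have hD : IntegrableOn (fun t => fnorm ((R t)ᵀ * Rg' t)) (Set.Ici 0) :=
    hsum.congr_fun (fun t ht => ((hRSO t ht).fnorm_transpose_mul (Rg' t)).symm) measurableSet_Ici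
  obtain ⟨hphi_lim, hω_lim⟩ := tendsto_phi_and_velocity_zero hJ hkp hkd hε₀
    (fun t ht => (hRSO t ht).transpose_mul (hRgSO t ht))
    (fun t ht => hasDerivAt_transpose_mul_of_kinematics (hR t ht) (hRg t ht))
    (fun t ht => hasDerivAt_pi.mpr (hω t ht)) hdyn hD hphi
  have hnonneg : ∀ᶠ t : ℝ in atTop, 0 ≤ t := eventually_ge_atTop 0
  have hsub : Tendsto (fun t => R t - Rg t) atTop (𝓝 0) :=
    tendsto_sub_zero_of_phi (hnonneg.mono hRSO) (hnonneg.mono hRgSO) hphi_lim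
  exact ⟨by simpa using hsub.add hRgconv, hω_lim⟩

/-- Convergence of the attitude under summable reference variation: if the
reference derivative is bounded and integrable, `R_g(t) → R_d ∈ SO(3)`, and the
error stays away from the antipodal set (`φ(RᵀR_g) ≤ 2 − ε`), then
`R(t) → R_d` and `ω(t) → 0`. -/
theorem attitude_convergence_summable_reference
    (J : M3) (kp kd M ε : ℝ)
    (hJ : J.PosDef) (hkp : 0 < kp) (hkd : 0 < kd)
    (hε₀ : 0 < ε) (hε₂ : ε < 2)
    (R Rg Rg' : ℝ → M3) (ω ω' : ℝ → V3) (Rd : M3) (hRd : SO3 Rd)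
    (hRSO : ∀ t ∈ Set.Ici (0 : ℝ), SO3 (R t))
    (hRgSO : ∀ t ∈ Set.Ici (0 : ℝ), SO3 (Rg t))
    (hR : ∀ t ∈ Set.Ici (0 : ℝ), ∀ i j,
      HasDerivAt (fun s => R s i j) ((R t * hat (ω t)) i j) t)
    (hω : ∀ t ∈ Set.Ici (0 : ℝ), ∀ i, HasDerivAt (fun s => ω s i) (ω' t i) t)
    (hdyn : ∀ t ∈ Set.Ici (0 : ℝ), J.mulVec (ω' t) =
      crossProduct (J.mulVec (ω t)) (ω t) + tauPD kp kd (R t) (Rg t) (ω t))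
    (hRg : ∀ t ∈ Set.Ici (0 : ℝ), ∀ i j,
      HasDerivAt (fun s => Rg s i j) (Rg' t i j) t)
    (hM : ∀ t ∈ Set.Ici (0 : ℝ), fnorm (Rg' t) ≤ M)
    (hsum : IntegrableOn (fun t => fnorm (Rg' t)) (Set.Ici (0 : ℝ)))
    (hRgconv : Tendsto Rg atTop (nhds Rd))
    (hphi : ∀ t ∈ Set.Ici (0 : ℝ), phi ((R t)ᵀ * Rg t) ≤ 2 - ε) :
    Tendsto R atTop (nhds Rd) ∧ Tendsto ω atTop (nhds 0) := by
  exact attitude_convergence_summable_reference_general J kp kd ε hJ hkp hkd hε₀ R Rg Rg' ω ω' Rd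
    hRSO hRgSO hR hω hdyn hRg hsum hRgconv hphi
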